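/- For every real γ > 1, the equation λ(λ−1)(λ−2) − 12(2λ/(1+γ) + 2) = 0 has exactly one real solution λ₀; the equation λ(λ−1)(λ−2) − 12(λ+2) = 0 also has exactly one real solution μ₀; and 4 < λ₀ < μ₀. -/

import Mathlib

/-!
A real cubic with negative discriminant changes sign exactly once: dividing out a real root `r`
leaves a quadratic `q`, and the cubic's discriminant is the discriminant of `q` times `q(r) ^ 2`,
so `q` has no real zero. Both equations belong to the family
`x (x - 1) (x - 2) - 12 (c x + 2) = 0` with `c = 2 / (1 + γ)` and `c = 1`, whose discriminant is
negative for `c ≤ 1`. Locating a point relative to the root is then a matter of evaluating signs: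
the cubic takes the value `-48 c` at `4`, and on the positive half-line it decreases as `c` grows.
-/

open Filter Polynomial

theorem tendsto_pow_atBot_atBot_of_odd {R : Type*} [Ring R] [LinearOrder R] [IsStrictOrderedRing R]
    {n : ℕ} (hn : Odd n) : Tendsto (fun x : R => x ^ n) atBot atBot := by
  have hneg : Tendsto (fun x : R => -(-x) ^ n) atBot atBot :=
    tendsto_neg_atTop_atBot.comp
      ((tendsto_pow_atTop hn.pos.ne').comp tendsto_neg_atBot_atTop)
  simpa only [hn.neg_pow, neg_neg] using hneg

theorem tendsto_eval_atBot_of_odd_natDegree {𝕜 : Type*} [NormedField 𝕜] [LinearOrder 𝕜]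
    [IsStrictOrderedRing 𝕜] [OrderTopology 𝕜] {P : 𝕜[X]} (hodd : Odd P.natDegree)
    (hlead : 0 < P.leadingCoeff) : Tendsto (fun x => P.eval x) atBot atBot :=
  P.isEquivalent_atBot_lead.symm.tendsto_atBot
    ((tendsto_pow_atBot_atBot_of_odd hodd).const_mul_atBot hlead)

theorem surjective_eval_of_odd_natDegree {P : ℝ[X]} (hodd : Odd P.natDegree) :
    Function.Surjective fun x => P.eval x := by
  wlog hlead : 0 < P.leadingCoeff generalizing P
  · have hP : P.leadingCoeff ≠ 0 := leadingCoeff_ne_zero.mpr (ne_zero_of_natDegree_gt hodd.pos)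
    intro y
    obtain ⟨x, hx⟩ := this (P := -P) (by rwa [natDegree_neg])
      (by rw [leadingCoeff_neg]; exact neg_pos.mpr (lt_of_le_of_ne (not_lt.mp hlead) hP)) (-y)
    exact ⟨x, by simpa using hx⟩
  · exact P.continuous.surjective
      (P.tendsto_atTop_of_leadingCoeff_nonneg (natDegree_pos_iff_degree_pos.mp hodd.pos) hlead.le)
      (tendsto_eval_atBot_of_odd_natDegree hodd hlead)

instance isRealClosed_real : IsRealClosed ℝ :=
  .of_linearOrderedField Real.isSquare_iff.mpr
    fun hodd => surjective_eval_of_odd_natDegree hodd 0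

theorem sign_quadratic_of_discrim_neg {R : Type*} [CommRing R] [LinearOrder R]
    [IsStrictOrderedRing R] {a b c : R} (h : discrim a b c < 0) (x : R) :
    SignType.sign (a * x ^ 2 + b * x + c) = SignType.sign a := by
  have hmul : 0 < a * (a * x ^ 2 + b * x + c) := by
    have hsq := sq_nonneg (2 * a * x + b)
    rw [discrim] at h
    linarith
  rcases pos_and_pos_or_neg_and_neg_of_mul_pos hmul with ⟨ha, hq⟩ | ⟨ha, hq⟩
  · rw [sign_pos ha, sign_pos hq]
  · rw [sign_neg ha, sign_neg hq]

section

variable {R : Type*} [CommRing R]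

theorem cubic_eval_eq (P : Cubic R) (x : R) :
    P.toPoly.eval x = P.a * x ^ 3 + P.b * x ^ 2 + P.c * x + P.d := by
  simp [Cubic.toPoly]

variable {P : Cubic R} {r : R}

theorem cubic_eval_eq_sub_mul_of_isRoot (hr : P.toPoly.IsRoot r) (x : R) :
    P.toPoly.eval x =
      (x - r) * (P.a * x ^ 2 + (P.a * r + P.b) * x + (P.a * r ^ 2 + P.b * r + P.c)) := by
  rw [IsRoot, cubic_eval_eq] at hr
  rw [cubic_eval_eq]
  linear_combination hr

theorem cubic_discr_eq_discrim_mul_sq_of_isRoot (hr : P.toPoly.IsRoot r) :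
    P.discr = discrim P.a (P.a * r + P.b) (P.a * r ^ 2 + P.b * r + P.c) *
      (3 * P.a * r ^ 2 + 2 * P.b * r + P.c) ^ 2 := by
  rw [IsRoot, cubic_eval_eq] at hr
  have hd : P.d = -(P.a * r ^ 3 + P.b * r ^ 2 + P.c * r) := by linear_combination hr
  rw [Cubic.discr, discrim, hd]
  ring

end

theorem exists_sign_cubic_eq_of_discr_neg {K : Type*} [Field K] [LinearOrder K]
    [IsStrictOrderedRing K] [IsRealClosed K] {P : Cubic K} (ha : P.a ≠ 0) (hP : P.discr < 0) :
    ∃ r, ∀ x, SignType.sign (P.toPoly.eval x) = SignType.sign (x - r) * SignType.sign P.a := by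
  have hodd : Odd P.toPoly.natDegree := by
    rw [Cubic.natDegree_of_a_ne_zero ha]
    decide
  obtain ⟨r, hr⟩ := IsRealClosed.exists_isRoot_of_odd_natDegree hodd
  have hdiscrim : discrim P.a (P.a * r + P.b) (P.a * r ^ 2 + P.b * r + P.c) < 0 := by
    rw [cubic_discr_eq_discrim_mul_sq_of_isRoot hr] at hP
    exact neg_of_mul_neg_left hP (sq_nonneg _)
  refine ⟨r, fun x => ?_⟩
  rw [cubic_eval_eq_sub_mul_of_isRoot hr, sign_mul, sign_quadratic_of_discrim_neg hdiscrim]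

/-- The cubic `x (x - 1) (x - 2) - 12 (c x + 2)`, recorded by its coefficients. The two equations
of the theorem are its cases `c = 2 / (1 + γ)` and `c = 1`. -/
def familyCubic (c : ℝ) : Cubic ℝ := ⟨1, -3, 2 - 12 * c, -24⟩

theorem familyCubic_eval (c x : ℝ) :
    (familyCubic c).toPoly.eval x = x * (x - 1) * (x - 2) - 12 * (c * x + 2) := by
  rw [cubic_eval_eq, familyCubic]
  ring

theorem familyCubic_discr_neg {c : ℝ} (hc : c ≤ 1) : (familyCubic c).discr < 0 := by
  simp only [Cubic.discr, familyCubic]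
  -- `c = -4 / 5` is close to the local maximum of the discriminant as a function of `c`.
  nlinarith [mul_nonneg (sub_nonneg.mpr hc) (sq_nonneg (c + 4 / 5)), sq_nonneg (c + 4 / 5)]

theorem exists_familyCubic_sign_change {c : ℝ} (hc : c ≤ 1) :
    ∃ r, ∀ x, ((familyCubic c).toPoly.eval x = 0 ↔ x = r) ∧
      ((familyCubic c).toPoly.eval x < 0 ↔ x < r) := by
  obtain ⟨r, hr⟩ := exists_sign_cubic_eq_of_discr_neg one_ne_zero (familyCubic_discr_neg hc)
  have hsign (x : ℝ) :
      SignType.sign ((familyCubic c).toPoly.eval x) = SignType.sign (x - r) := by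
    rw [hr, familyCubic, sign_one, mul_one]
  refine ⟨r, fun x => ⟨?_, ?_⟩⟩
  · rw [← sign_eq_zero_iff, hsign, sign_eq_zero_iff, sub_eq_zero]
  · rw [← sign_eq_neg_one_iff, hsign, sign_eq_neg_one_iff, sub_neg]

theorem familyCubic_eval_four (c : ℝ) : (familyCubic c).toPoly.eval 4 = -48 * c := by
  rw [familyCubic_eval]
  ring

theorem familyCubic_eval_strictAnti {x : ℝ} (hx : 0 < x) :
    StrictAnti fun c => (familyCubic c).toPoly.eval x := by
  intro c d hcd
  simp only [familyCubic_eval]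
  gcongr

/-- For every real `γ > 1`, the cubic equation `λ(λ−1)(λ−2) − 12(2λ/(1+γ) + 2) = 0`
has exactly one real solution `λ₀`, the equation `λ(λ−1)(λ−2) − 12(λ+2) = 0` has
exactly one real solution `μ₀`, and `4 < λ₀ < μ₀`. -/
theorem cubic_unique_roots (γ : ℝ) (hγ : 1 < γ) :
    ∃ l₀ μ₀ : ℝ,
      (∀ x : ℝ, x * (x - 1) * (x - 2) - 12 * (2 * x / (1 + γ) + 2) = 0 ↔ x = l₀) ∧
      (∀ x : ℝ, x * (x - 1) * (x - 2) - 12 * (x + 2) = 0 ↔ x = μ₀) ∧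
      4 < l₀ ∧ l₀ < μ₀ := by
  have hc₀ : 0 < 2 / (1 + γ) := by positivity
  have hc₁ : 2 / (1 + γ) < 1 := by rw [div_lt_one (by positivity)]; linarith
  obtain ⟨l, hl⟩ := exists_familyCubic_sign_change hc₁.le
  obtain ⟨m, hm⟩ := exists_familyCubic_sign_change le_rfl
  have hl_gt : 4 < l := by
    rw [← (hl 4).2, familyCubic_eval_four]
    linarith
  have hl_lt : l < m := by
    rw [← (hm l).2, ← (hl l).1.mpr rfl]
    exact familyCubic_eval_strictAnti (by linarith) hc₁
  refine ⟨l, m, fun x => ?_, fun x => ?_, hl_gt, hl_lt⟩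
  · rw [← (hl x).1, familyCubic_eval, div_mul_eq_mul_div]
  · rw [← (hm x).1, familyCubic_eval, one_mul]
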